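/- arXiv:1608.07056 — 7 statements merged into one kernel-verified Lean document; each statement's English description precedes it below -/
import Mathlib

section
/- Let (S, α) be an instance of Min-CSG: S a finite set of points in the plane, α a coloring with k primary colors. Let c ∈ {1,…,k} be a primary color with S_c ≠ ∅, let T be a minimum spanning tree of S_c with edge set E(T), and let S_c′ denote the set of multichromatic points belonging to S_c; assume S_c′ ≠ ∅. Then there exists a minimum colored spanning graph (S, E) for (S, α) such that |E ∩ E(T)| ≥ |E(T)| − |S_c′| + 1. -/
/-!
Let `E` be a minimum colored spanning graph and let `D` be the set of its edges of color exactly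
`{c}`. The edges in `D` matter only for the connectivity of `S_c`, so replacing `D` by any set `F`
of no larger weight for which `(E \ D) ∪ F` still connects `S_c` gives again a minimum CSG.

`IsMST.exists_exchange` finds such an `F` inside the minimum spanning tree `T`: an edge `uv` of
`D` outside `T` is either redundant or a bridge, and in the latter case some edge of the tree path
from `u` to `v` reconnects the two sides; by minimality of `T` it is no longer than `uv`
(`IsMST.exists_crossing_le`).

The remaining edges `E \ D` inside `S_c` carry `c` and a further color, so they join points of
`S_c'`. Replacing them by a star on `S_c'` keeps `S_c` connected, so that
`(|S_c'| - 1) + |F| ≥ |S_c| - 1 = |E(T)|` (`card_le_of_connOn_union`). Since `F ⊆ T`, this is the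
required bound.
-/

open scoped BigOperators

namespace MCSG

noncomputable section

/-- Points in the plane. -/
abbrev Pt : Type := EuclideanSpace ℝ (Fin 2)

noncomputable instance : DecidableEq Pt := Classical.decEq _

/-- Euclidean length of an edge (unordered pair of points). -/
def edgeWeight : Sym2 Pt → ℝ :=
  Sym2.lift ⟨fun p q => dist p q, fun p q => dist_comm p q⟩

/-- Total weight of an edge set. -/
def totalWeight (E : Finset (Sym2 Pt)) : ℝ := ∑ e ∈ E, edgeWeight e

/-- The color of an edge: the common primary colors of its endpoints. -/
def edgeColor {k : ℕ} (α : Pt → Finset (Fin k)) : Sym2 Pt → Finset (Fin k) :=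
  Sym2.lift ⟨fun p q => α p ∩ α q, fun p q => Finset.inter_comm _ _⟩

/-- `E` is a set of edges on the vertex set `S` (no loops). -/
def EdgesOn (S : Finset Pt) (E : Finset (Sym2 Pt)) : Prop :=
  ∀ e ∈ E, ¬ e.IsDiag ∧ ∀ p ∈ e, p ∈ S

/-- One step in the subgraph of the edge set `E` induced by the vertex set `V`. -/
def AdjIn (V : Set Pt) (E : Finset (Sym2 Pt)) (p q : Pt) : Prop :=
  p ∈ V ∧ q ∈ V ∧ p ≠ q ∧ s(p, q) ∈ E

/-- Reachability in the subgraph of `E` induced by `V`. -/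
def ReachIn (V : Set Pt) (E : Finset (Sym2 Pt)) : Pt → Pt → Prop :=
  Relation.ReflTransGen (AdjIn V E)

/-- The subgraph of `E` induced by `V` is connected. -/
def ConnOn (V : Finset Pt) (E : Finset (Sym2 Pt)) : Prop :=
  ∀ p ∈ V, ∀ q ∈ V, ReachIn (↑V) E p q

/-- The set `S_c` of points of `S` having primary color `c`. -/
def Sc {k : ℕ} (S : Finset Pt) (α : Pt → Finset (Fin k)) (c : Fin k) : Finset Pt :=
  S.filter fun p => c ∈ α p

/-- `(S, E)` is a colored spanning graph for the instance `(S, α)`. -/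
def IsCSG {k : ℕ} (S : Finset Pt) (α : Pt → Finset (Fin k)) (E : Finset (Sym2 Pt)) : Prop :=
  EdgesOn S E ∧ ∀ c : Fin k, ConnOn (Sc S α c) E

/-- `(S, E)` is a minimum colored spanning graph for `(S, α)`. -/
def IsMinCSG {k : ℕ} (S : Finset Pt) (α : Pt → Finset (Fin k)) (E : Finset (Sym2 Pt)) : Prop :=
  IsCSG S α E ∧ ∀ E' : Finset (Sym2 Pt), IsCSG S α E' → totalWeight E ≤ totalWeight E'

/-- `T` is a spanning tree of (the complete graph on) the point set `P`. -/
def IsSpanningTreeOn (P : Finset Pt) (T : Finset (Sym2 Pt)) : Prop :=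
  EdgesOn P T ∧ ConnOn P T ∧ T.card + 1 = P.card

/-- `T` is a minimum spanning tree of the point set `P`. -/
def IsMST (P : Finset Pt) (T : Finset (Sym2 Pt)) : Prop :=
  IsSpanningTreeOn P T ∧ ∀ T', IsSpanningTreeOn P T' → totalWeight T ≤ totalWeight T'

/-- Restricted coloring `α_γ`. -/
def restrictColor {k : ℕ} (γ : Finset (Fin k)) (α : Pt → Finset (Fin k)) : Pt → Finset (Fin k) :=
  fun p => α p ∩ γ

/-- Restricted point set `S_γ`. -/
def Sγ {k : ℕ} (S : Finset Pt) (α : Pt → Finset (Fin k)) (γ : Finset (Fin k)) : Finset Pt :=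
  S.filter fun p => (α p ∩ γ).Nonempty

/-- `ρ` is a Steiner ratio bound. -/
def SteinerRatioBound (ρ : ℝ) : Prop :=
  ∀ P Q : Finset Pt, P.Nonempty → P ⊆ Q →
    ∀ T : Finset (Sym2 Pt), EdgesOn Q T → ConnOn Q T →
      ∀ M : Finset (Sym2 Pt), IsMST P M → totalWeight M ≤ ρ * totalWeight T

end


/-! ### Reachability -/

lemma ReachIn.symm {V : Set Pt} {E : Finset (Sym2 Pt)} {p q : Pt} (h : ReachIn V E p q) :
    ReachIn V E q p := by
  induction h with
  | refl => exact .refl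
  | tail _ hbc ih =>
    obtain ⟨h1, h2, h3, h4⟩ := hbc
    exact .head ⟨h2, h1, h3.symm, by rwa [Sym2.eq_swap]⟩ ih

lemma ReachIn.of_adj {V : Set Pt} {E E' : Finset (Sym2 Pt)} {p q : Pt} (h : ReachIn V E p q)
    (hE : ∀ x ∈ V, ∀ y ∈ V, s(x, y) ∈ E → ReachIn V E' x y) : ReachIn V E' p q := by
  induction h with
  | refl => exact .refl
  | tail _ hbc ih => exact ih.trans (hE _ hbc.1 _ hbc.2.1 hbc.2.2.2)

lemma reachIn_of_mem {V : Set Pt} {E : Finset (Sym2 Pt)} {x y : Pt} (hx : x ∈ V) (hy : y ∈ V)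
    (h : s(x, y) ∈ E) : ReachIn V E x y := by
  by_cases hxy : x = y
  · subst hxy; exact .refl
  · exact .single ⟨hx, hy, hxy, h⟩

lemma ReachIn.mono {V : Set Pt} {E E' : Finset (Sym2 Pt)} {p q : Pt} (h : ReachIn V E p q)
    (hE : E ⊆ E') : ReachIn V E' p q :=
  h.of_adj fun _ hx _ hy hxy => reachIn_of_mem hx hy (hE hxy)

/-- A walk from `u` to `v` either avoids the edge `ab`, or it splits, up to swapping `a` and `b`,
into a walk from `u` to `a` and a walk from `b` to `v` that both avoid `ab`. -/
lemma ReachIn.split {V : Set Pt} {E : Finset (Sym2 Pt)} {u v : Pt} (h : ReachIn V E u v)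
    (a b : Pt) :
    ReachIn V (E.erase s(a, b)) u v ∨
    (ReachIn V (E.erase s(a, b)) u a ∧ ReachIn V (E.erase s(a, b)) b v) ∨
    (ReachIn V (E.erase s(a, b)) u b ∧ ReachIn V (E.erase s(a, b)) a v) := by
  induction h with
  | refl => exact .inl .refl
  | @tail x y _ hxy ih =>
    by_cases he : s(x, y) = s(a, b)
    · rcases Sym2.eq_iff.1 he with ⟨rfl, rfl⟩ | ⟨rfl, rfl⟩
      · rcases ih with h | ⟨h, -⟩ | ⟨h, -⟩
        · exact .inr (.inl ⟨h, .refl⟩)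
        · exact .inr (.inl ⟨h, .refl⟩)
        · exact .inl h
      · rcases ih with h | ⟨h, -⟩ | ⟨h, -⟩
        · exact .inr (.inr ⟨h, .refl⟩)
        · exact .inl h
        · exact .inr (.inr ⟨h, .refl⟩)
    · have hs : ReachIn V (E.erase s(a, b)) x y :=
        reachIn_of_mem hxy.1 hxy.2.1 (Finset.mem_erase.2 ⟨he, hxy.2.2.2⟩)
      rcases ih with h | ⟨h, h'⟩ | ⟨h, h'⟩
      · exact .inl (h.trans hs)
      · exact .inr (.inl ⟨h, h'.trans hs⟩)
      · exact .inr (.inr ⟨h, h'.trans hs⟩)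

lemma ReachIn.exists_crossing {V : Set Pt} {E : Finset (Sym2 Pt)} {u v : Pt}
    (h : ReachIn V E u v) (A : Set Pt) (hu : u ∈ A) (hv : v ∉ A) :
    ∃ a b, a ∈ A ∧ b ∉ A ∧ AdjIn V E a b := by
  induction h with
  | refl => exact absurd hu hv
  | @tail x y _ hxy ih =>
    by_cases hx : x ∈ A
    · exact ⟨x, y, hx, hv, hxy⟩
    · exact ih hx

/-! ### Weights and edge counts -/

lemma edgeWeight_nonneg (e : Sym2 Pt) : 0 ≤ edgeWeight e := by
  induction e with
  | h p q => exact dist_nonneg (x := p) (y := q)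

lemma totalWeight_erase_add {E : Finset (Sym2 Pt)} {e : Sym2 Pt} (h : e ∈ E) :
    totalWeight (E.erase e) + edgeWeight e = totalWeight E :=
  Finset.sum_erase_add _ _ h

lemma totalWeight_union_le (E F : Finset (Sym2 Pt)) :
    totalWeight (E ∪ F) ≤ totalWeight E + totalWeight F := by
  unfold totalWeight
  rw [← Finset.sum_union_inter]
  exact le_add_of_nonneg_right (Finset.sum_nonneg fun e _ => edgeWeight_nonneg e)

lemma totalWeight_insert_le (E : Finset (Sym2 Pt)) (e : Sym2 Pt) :
    totalWeight (insert e E) ≤ edgeWeight e + totalWeight E := by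
  rw [Finset.insert_eq]
  simpa [totalWeight] using totalWeight_union_le {e} E

/-- A connected graph on `P` has at least `|P| - 1` edges. -/
lemma ConnOn.card_le {P : Finset Pt} {G : Finset (Sym2 Pt)} (hP : P.Nonempty)
    (h : ConnOn P G) : P.card ≤ G.card + 1 := by
  classical
  let H : SimpleGraph P :=
    { Adj := fun p q => p ≠ q ∧ s((p : Pt), (q : Pt)) ∈ G
      symm := ⟨fun p q hpq => ⟨hpq.1.symm, by rw [Sym2.eq_swap]; exact hpq.2⟩⟩
      loopless := ⟨fun p hp => hp.1 rfl⟩ }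
  have hreach : ∀ (p q : Pt), ReachIn (↑P) G p q → ∀ (hp : p ∈ P) (hq : q ∈ P),
      H.Reachable ⟨p, hp⟩ ⟨q, hq⟩ := by
    intro p q hpq
    induction hpq with
    | refl => intro _ _; exact SimpleGraph.Reachable.refl _
    | tail _ hxy ih =>
      intro hp hq
      refine (ih hp hxy.1).trans (SimpleGraph.Adj.reachable ?_)
      exact ⟨fun e => hxy.2.2.1 (congrArg Subtype.val e), hxy.2.2.2⟩
  have hconn : H.Connected := by
    have : Nonempty P := hP.to_subtype
    exact ⟨fun p q => hreach p q (h p p.2 q q.2) p.2 q.2⟩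
  have h1 := hconn.card_vert_le_card_edgeSet_add_one
  have h2 : Nat.card H.edgeSet ≤ G.card := by
    rw [← Nat.card_eq_finsetCard G]
    refine Nat.card_le_card_of_injective
      (fun e : H.edgeSet => (⟨Sym2.map Subtype.val e.1, ?_⟩ : G)) ?_
    · obtain ⟨e, he⟩ := e
      induction e with
      | h p q => exact he.2
    · intro e f hef
      exact Subtype.ext (Sym2.map.injective Subtype.val_injective (congrArg Subtype.val hef))
  rw [Nat.card_eq_fintype_card, Fintype.card_coe] at h1
  omega

/-! ### Exchange with a minimum spanning tree -/

/-- Cycle property of a minimum spanning tree: if a cut separates the endpoints of an edge `uv`,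
some tree edge crossing the cut is no longer than `uv`. -/
lemma IsMST.exists_crossing_le {P : Finset Pt} {T : Finset (Sym2 Pt)} (hT : IsMST P T)
    {u v : Pt} (hu : u ∈ P) (hv : v ∈ P) (A : Set Pt) (huA : u ∈ A) (hvA : v ∉ A) :
    ∃ a b, a ∈ A ∧ b ∉ A ∧ AdjIn (↑P) T a b ∧ edgeWeight s(a, b) ≤ edgeWeight s(u, v) := by
  classical
  have huv : u ≠ v := fun h => hvA (h ▸ huA)
  by_cases hd : s(u, v) ∈ T
  · exact ⟨u, v, huA, hvA, ⟨hu, hv, huv, hd⟩, le_rfl⟩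
  -- An inclusion-minimal connecting subset `H` of `T` is the edge set of the tree path from `u` to `v`.
  obtain ⟨H, hH, hmin⟩ := Finset.exists_min_image
    (T.powerset.filter fun H => ReachIn (↑P) H u v) Finset.card
    ⟨T, by simpa using hT.1.2.1 u hu v hv⟩
  rw [Finset.mem_filter, Finset.mem_powerset] at hH
  obtain ⟨a, b, ha, hb, hab⟩ := hH.2.exists_crossing A huA hvA
  have habT : s(a, b) ∈ T := hH.1 hab.2.2.2
  refine ⟨a, b, ha, hb, ⟨hab.1, hab.2.1, hab.2.2.1, habT⟩, ?_⟩
  have hno : ¬ ReachIn (↑P) (H.erase s(a, b)) u v := by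
    intro h
    have := hmin (H.erase s(a, b)) (by
      rw [Finset.mem_filter, Finset.mem_powerset]
      exact ⟨(Finset.erase_subset _ _).trans hH.1, h⟩)
    have := Finset.card_erase_lt_of_mem hab.2.2.2
    omega
  set T' := insert s(u, v) (T.erase s(a, b)) with hT'
  have hsub : H.erase s(a, b) ⊆ T' :=
    (Finset.erase_subset_erase _ hH.1).trans (Finset.subset_insert _ _)
  have huvT' : ReachIn (↑P) T' u v := reachIn_of_mem hu hv (Finset.mem_insert_self _ _)
  -- Going from `a` to `u`, along `uv`, and from `v` to `b` replaces the deleted edge `ab`.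
  have habT' : ReachIn (↑P) T' a b := by
    rcases hH.2.split a b with h | ⟨h, h'⟩ | ⟨h, h'⟩
    · exact absurd h hno
    · exact ((h.mono hsub).symm.trans huvT').trans (h'.mono hsub).symm
    · exact ((h'.mono hsub).trans huvT'.symm).trans (h.mono hsub)
  have hspan : IsSpanningTreeOn P T' := by
    refine ⟨?_, ?_, ?_⟩
    · intro e he
      rcases Finset.mem_insert.1 he with rfl | he
      · refine ⟨by simpa using huv, fun p hp => ?_⟩
        rcases Sym2.mem_iff.1 hp with rfl | rfl <;> assumption
      · exact hT.1.1 e (Finset.mem_of_mem_erase he)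
    · intro p hp q hq
      refine (hT.1.2.1 p hp q hq).of_adj fun x hx y hy hxy => ?_
      by_cases he : s(x, y) = s(a, b)
      · rcases Sym2.eq_iff.1 he with ⟨rfl, rfl⟩ | ⟨rfl, rfl⟩
        · exact habT'
        · exact habT'.symm
      · exact reachIn_of_mem hx hy
          (Finset.mem_insert_of_mem (Finset.mem_erase.2 ⟨he, hxy⟩))
    · rw [hT', Finset.card_insert_of_notMem (fun h => hd (Finset.mem_of_mem_erase h)),
        Finset.card_erase_add_one habT]
      exact hT.1.2.2
  have h1 := hT.2 T' hspan
  have h2 := totalWeight_insert_le (T.erase s(a, b)) s(u, v)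
  have h3 := totalWeight_erase_add habT
  rw [← hT'] at h2
  linarith

/-- If `R ∪ D` connects `P`, the edges of `D` can be exchanged for edges of a minimum spanning
tree of `P` without increasing the weight and without changing `R`. -/
lemma IsMST.exists_exchange {P : Finset Pt} {T : Finset (Sym2 Pt)} (hT : IsMST P T)
    (R : Finset (Sym2 Pt)) (D : Finset (Sym2 Pt)) (hD : EdgesOn P D) (hconn : ConnOn P (R ∪ D)) :
    ∃ F ⊆ T, ConnOn P (R ∪ F) ∧ totalWeight F ≤ totalWeight D := by
  classical
  induction hn : (D \ T).card using Nat.strong_induction_on generalizing D with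
  | _ n IH =>
  by_cases hDT : D ⊆ T
  · exact ⟨D, hDT, hconn, le_rfl⟩
  obtain ⟨d, hdD, hdT⟩ := Finset.not_subset.1 hDT
  induction d with
  | h u v =>
  have hu : u ∈ P := (hD _ hdD).2 u (by simp)
  have hv : v ∈ P := (hD _ hdD).2 v (by simp)
  have hw := totalWeight_erase_add hdD
  have hlt : ((D.erase s(u, v)) \ T).card < n := by
    rw [← hn]
    refine Finset.card_lt_card ((Finset.ssubset_iff_of_subset
      (Finset.sdiff_subset_sdiff (Finset.erase_subset _ _) le_rfl)).2 ⟨s(u, v), ?_, ?_⟩)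
    · simp [hdD, hdT]
    · simp
  -- If `D'` keeps all edges of `D` but `uv`, then `R ∪ D'` connects `P` once it connects `u` to `v`.
  have hsuff : ∀ D' : Finset (Sym2 Pt), D.erase s(u, v) ⊆ D' →
      ReachIn (↑P) (R ∪ D') u v → ConnOn P (R ∪ D') := by
    intro D' hsub huv p hp q hq
    refine (hconn p hp q hq).of_adj fun x hx y hy hxy => ?_
    by_cases he : s(x, y) = s(u, v)
    · rcases Sym2.eq_iff.1 he with ⟨rfl, rfl⟩ | ⟨rfl, rfl⟩
      · exact huv
      · exact huv.symm
    · refine reachIn_of_mem hx hy ?_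
      rcases Finset.mem_union.1 hxy with h | h
      · exact Finset.mem_union_left _ h
      · exact Finset.mem_union_right _ (hsub (Finset.mem_erase.2 ⟨he, h⟩))
  by_cases huv : ReachIn (↑P) (R ∪ D.erase s(u, v)) u v
  · obtain ⟨F, hF, hc, hle⟩ := IH _ hlt (D.erase s(u, v))
      (fun e he => hD e (Finset.mem_of_mem_erase he)) (hsuff _ le_rfl huv) rfl
    exact ⟨F, hF, hc, by linarith [edgeWeight_nonneg s(u, v)]⟩
  · obtain ⟨a, b, ha, hb, hab, hle⟩ := hT.exists_crossing_le hu hv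
      {x | ReachIn (↑P) (R ∪ D.erase s(u, v)) u x} .refl huv
    have hsub0 : (R ∪ D).erase s(u, v) ⊆ R ∪ D.erase s(u, v) := by
      intro e; simp only [Finset.mem_erase, Finset.mem_union]; tauto
    -- Deleting `uv` leaves two components, so `b`, not being in that of `u`, is in that of `v`.
    have hvb : ReachIn (↑P) (R ∪ D.erase s(u, v)) v b := by
      rcases (hconn u hu b hab.2.1).split u v with h | ⟨-, h⟩ | ⟨h, -⟩
      · exact absurd (h.mono hsub0) hb
      · exact h.mono hsub0
      · exact absurd (h.mono hsub0) huv
    set D' := insert s(a, b) (D.erase s(u, v)) with hD'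
    have hsub : R ∪ D.erase s(u, v) ⊆ R ∪ D' :=
      Finset.union_subset_union le_rfl (Finset.subset_insert _ _)
    have habD' : ReachIn (↑P) (R ∪ D') a b := reachIn_of_mem hab.1 hab.2.1
      (Finset.mem_union_right _ (Finset.mem_insert_self _ _))
    have huv' : ReachIn (↑P) (R ∪ D') u v :=
      ((ReachIn.mono ha hsub).trans habD').trans (hvb.mono hsub).symm
    have hlt' : (D' \ T).card < n := by
      rwa [hD', Finset.insert_sdiff_of_mem _ hab.2.2.2]
    obtain ⟨F, hF, hc, hle'⟩ := IH _ hlt' D' (by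
      intro e he
      rcases Finset.mem_insert.1 he with rfl | he
      · exact hT.1.1 _ hab.2.2.2
      · exact hD e (Finset.mem_of_mem_erase he)) (hsuff _ (Finset.subset_insert _ _) huv') rfl
    have h2 := totalWeight_insert_le (D.erase s(u, v)) s(a, b)
    rw [← hD'] at h2
    exact ⟨F, hF, hc, by linarith⟩

/-! ### Counting the kept tree edges -/

/-- If `R ∪ F` connects `P` and all edges of `R` inside `P` join points of `S'`, then `F` has at
least `|P| - |S'|` edges, because a star on `S'` connects at least as much as `R` does. -/
lemma card_le_of_connOn_union {P S' : Finset Pt} {R F : Finset (Sym2 Pt)} (hS' : S'.Nonempty)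
    (hS'P : S' ⊆ P) (hconn : ConnOn P (R ∪ F))
    (hR : ∀ p ∈ P, ∀ q ∈ P, s(p, q) ∈ R → p ∈ S' ∧ q ∈ S') :
    P.card ≤ F.card + S'.card := by
  classical
  obtain ⟨s, hs⟩ := hS'
  set K := (S'.erase s).image fun x => s(s, x) with hK
  have hstar : ∀ x ∈ S', ReachIn (↑P) (K ∪ F) s x := by
    intro x hx
    by_cases hxs : x = s
    · subst hxs; exact .refl
    · exact reachIn_of_mem (hS'P hs) (hS'P hx) (Finset.mem_union_left _
        (Finset.mem_image_of_mem _ (Finset.mem_erase.2 ⟨hxs, hx⟩)))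
  have hc : ConnOn P (K ∪ F) := by
    intro p hp q hq
    refine (hconn p hp q hq).of_adj fun x hx y hy hxy => ?_
    rcases Finset.mem_union.1 hxy with h | h
    · obtain ⟨h1, h2⟩ := hR x hx y hy h
      exact (hstar x h1).symm.trans (hstar y h2)
    · exact reachIn_of_mem hx hy (Finset.mem_union_right _ h)
  have h1 := hc.card_le ⟨s, hS'P hs⟩
  have h2 := Finset.card_union_le K F
  have h3 : K.card ≤ (S'.erase s).card := Finset.card_image_le
  have h4 := Finset.card_erase_add_one hs
  omega

/-! ### Minimum colored spanning graphs -/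

lemma exists_isMinCSG {k : ℕ} (S : Finset Pt) (α : Pt → Finset (Fin k)) :
    ∃ E, IsMinCSG S α E := by
  classical
  have hsub : ∀ E, EdgesOn S E → E ⊆ S.sym2 := fun E hE e he =>
    Finset.mem_sym2_iff.2 (hE e he).2
  have hfull : IsCSG S α (S.sym2.filter fun e => ¬ e.IsDiag) := by
    refine ⟨fun e he => ?_, fun c p hp q hq => ?_⟩
    · rw [Finset.mem_filter, Finset.mem_sym2_iff] at he
      exact ⟨he.2, he.1⟩
    · by_cases hpq : p = q
      · subst hpq; exact .refl
      · refine reachIn_of_mem hp hq ?_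
        have hp' := (Finset.mem_filter.1 hp).1
        have hq' := (Finset.mem_filter.1 hq).1
        simp [hp', hq', hpq]
  obtain ⟨E, hE, hmin⟩ := Finset.exists_min_image
    (S.sym2.powerset.filter fun E => IsCSG S α E) totalWeight
    ⟨_, Finset.mem_filter.2 ⟨Finset.mem_powerset.2 (hsub _ hfull.1), hfull⟩⟩
  exact ⟨E, (Finset.mem_filter.1 hE).2, fun E' hE' => hmin E'
    (Finset.mem_filter.2 ⟨Finset.mem_powerset.2 (hsub _ hE'.1), hE'⟩)⟩

/-- there is a minimum CSG containing at least |E(T)| - |S_c'| + 1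
edges of a given MST `T` of `S_c`, where `S_c'` is the set of multichromatic points of `S_c`. -/
theorem exists_minCSG_sharing_MST_edges {k : ℕ}
    (S : Finset Pt) (α : Pt → Finset (Fin k))
    (hα : ∀ p ∈ S, (α p).Nonempty)
    (c : Fin k) (hc : (Sc S α c).Nonempty)
    (T : Finset (Sym2 Pt)) (hT : IsMST (Sc S α c) T)
    (S' : Finset Pt) (hS' : S' = (Sc S α c).filter fun p => 1 < (α p).card)
    (hS'ne : S'.Nonempty) :
    ∃ E : Finset (Sym2 Pt), IsMinCSG S α E ∧
      (T.card : ℤ) - (S'.card : ℤ) + 1 ≤ ((E ∩ T).card : ℤ) := by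
  classical
  obtain ⟨E, ⟨hEon, hEconn⟩, hEmin⟩ := exists_isMinCSG S α
  set D := E.filter fun e => edgeColor α e = {c} with hD
  have hcolor : ∀ p q, edgeColor α s(p, q) = α p ∩ α q := fun _ _ => rfl
  have hDon : EdgesOn (Sc S α c) D := by
    intro e he
    obtain ⟨heE, hec⟩ := Finset.mem_filter.1 he
    refine ⟨(hEon e heE).1, fun p hp => Finset.mem_filter.2 ⟨(hEon e heE).2 p hp, ?_⟩⟩
    obtain ⟨q, rfl⟩ := hp
    have : c ∈ α p ∩ α q := by rw [← hcolor, hec]; exact Finset.mem_singleton_self c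
    exact (Finset.mem_inter.1 this).1
  have hDE : D ⊆ E := Finset.filter_subset _ _
  obtain ⟨F, hFT, hFconn, hFle⟩ := hT.exists_exchange (E \ D) D hDon (by
    rw [Finset.sdiff_union_of_subset hDE]; exact hEconn c)
  have hcard : (Sc S α c).card ≤ F.card + S'.card := by
    refine card_le_of_connOn_union hS'ne (hS' ▸ Finset.filter_subset _ _) hFconn ?_
    intro p hp q hq hpq
    obtain ⟨hpqE, hpqD⟩ := Finset.mem_sdiff.1 hpq
    have hcp := (Finset.mem_filter.1 hp).2
    have hcq := (Finset.mem_filter.1 hq).2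
    have hne : α p ∩ α q ≠ {c} := fun h => hpqD (Finset.mem_filter.2 ⟨hpqE, h⟩)
    have hcard : 1 < (α p ∩ α q).card := by
      by_contra! hle
      exact hne (Finset.eq_of_subset_of_card_le
        (Finset.singleton_subset_iff.2 (Finset.mem_inter.2 ⟨hcp, hcq⟩)) (by simpa using hle)).symm
    rw [hS', Finset.mem_filter, Finset.mem_filter]
    exact ⟨⟨hp, hcard.trans_le (Finset.card_le_card Finset.inter_subset_left)⟩,
      ⟨hq, hcard.trans_le (Finset.card_le_card Finset.inter_subset_right)⟩⟩
  have hCSG : IsCSG S α (E \ D ∪ F) := by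
    refine ⟨fun e he => ?_, fun c' => ?_⟩
    · rcases Finset.mem_union.1 he with he | he
      · exact hEon e (Finset.mem_sdiff.1 he).1
      · obtain ⟨h1, h2⟩ := hT.1.1 e (hFT he)
        exact ⟨h1, fun p hp => (Finset.mem_filter.1 (h2 p hp)).1⟩
    · by_cases hcc : c' = c
      · subst hcc; exact hFconn
      · intro p hp q hq
        refine (hEconn c' p hp q hq).of_adj fun x hx y hy hxy => ?_
        refine reachIn_of_mem hx hy (Finset.mem_union_left _ (Finset.mem_sdiff.2 ⟨hxy, ?_⟩))
        -- An edge inside `S_{c'}` carries the color `c' ≠ c`, hence was not exchanged.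
        intro hxyD
        have h1 : c' ∈ α x ∩ α y :=
          Finset.mem_inter.2 ⟨(Finset.mem_filter.1 hx).2, (Finset.mem_filter.1 hy).2⟩
        rw [← hcolor, (Finset.mem_filter.1 hxyD).2] at h1
        exact hcc (Finset.mem_singleton.1 h1)
  refine ⟨E \ D ∪ F, ⟨hCSG, fun E' hE' => ?_⟩, ?_⟩
  · have h1 := totalWeight_union_le (E \ D) F
    have h2 : totalWeight (E \ D) + totalWeight D = totalWeight E := Finset.sum_sdiff hDE
    linarith [hEmin E' hE']
  · have h1 : F.card ≤ ((E \ D ∪ F) ∩ T).card :=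
      Finset.card_le_card (Finset.subset_inter Finset.subset_union_right hFT)
    have h2 := hT.1.2.2
    omega

end MCSG
end

section
/- Let (S, α) be an instance of Min-3CSG with primary colors {r, b, y}. Let G_rb = (S_r ∪ S_b, E_rb) be a minimum CSG for the restricted instance (S_{{r,b}}, α_{{r,b}}), and let G_y be a minimum spanning tree of S_y. Then the union (S, E_rb ∪ E(G_y)) is a colored spanning graph for (S, α), and its total edge weight is at most 2 · OPT(S, α). -/
/-!
The union is a colored spanning graph because red and blue are connected by the red-blue graph
and yellow by the spanning tree. Its weight is at most twice the optimum because each of the two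
parts weighs at most as much as an optimal graph. Keeping only the edges of an optimal graph that
join points of `S_γ` leaves a colored spanning graph of the restricted instance
(`IsMinCSG.totalWeight_restrict_le`), and keeping only the edges that join yellow points leaves a
connected graph on the yellow points, which contains a spanning tree
(`exists_spanningTree_subset`, `IsMST.totalWeight_le`).
-/

open scoped BigOperators

namespace MCSG

lemma totalWeight_mono {E F : Finset (Sym2 Pt)} (h : E ⊆ F) : totalWeight E ≤ totalWeight F :=
  Finset.sum_le_sum_of_subset_of_nonneg h fun e _ _ => edgeWeight_nonneg e

lemma EdgesOn.mono {S S' : Finset Pt} {E : Finset (Sym2 Pt)} (h : EdgesOn S E) (hS : S ⊆ S') :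
    EdgesOn S' E :=
  fun e he => ⟨(h e he).1, fun p hp => hS ((h e he).2 p hp)⟩

/-- Only the edges with both ends in `V` matter for the connectedness of the subgraph induced
by `V`. -/
lemma ConnOn.mono {V : Finset Pt} {E F : Finset (Sym2 Pt)} (h : ConnOn V E)
    (hEF : ∀ e ∈ E, (∀ p ∈ e, p ∈ V) → e ∈ F) : ConnOn V F := by
  intro p hp q hq
  refine Relation.ReflTransGen.mono ?_ _ _ (h p hp q hq)
  rintro a b ⟨ha, hb, hne, hab⟩
  refine ⟨ha, hb, hne, hEF _ hab ?_⟩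
  intro x hx
  rcases Sym2.mem_iff.1 hx with rfl | rfl
  · exact ha
  · exact hb

lemma Sc_restrict {k : ℕ} (S : Finset Pt) (α : Pt → Finset (Fin k)) {γ : Finset (Fin k)}
    {c : Fin k} (hc : c ∈ γ) : Sc (Sγ S α γ) (restrictColor γ α) c = Sc S α c := by
  ext p
  simp only [Sc, Sγ, restrictColor, Finset.mem_filter, Finset.mem_inter]
  exact ⟨fun h => ⟨h.1.1, h.2.1⟩,
    fun h => ⟨⟨h.1, c, Finset.mem_inter.2 ⟨h.2, hc⟩⟩, h.2, hc⟩⟩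

/-- A minimum colored spanning graph of a restricted instance weighs at most as much as any
colored spanning graph of the full instance. -/
lemma IsMinCSG.totalWeight_restrict_le {k : ℕ} {S : Finset Pt} {α : Pt → Finset (Fin k)}
    {γ : Finset (Fin k)} {E F : Finset (Sym2 Pt)}
    (hE : IsMinCSG (Sγ S α γ) (restrictColor γ α) E) (hF : IsCSG S α F) :
    totalWeight E ≤ totalWeight F := by
  classical
  refine (hE.2 (F.filter fun e => ∀ p ∈ e, p ∈ Sγ S α γ) ⟨?_, ?_⟩).trans
    (totalWeight_mono (Finset.filter_subset _ _))
  · intro e he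
    rw [Finset.mem_filter] at he
    exact ⟨(hF.1 e he.1).1, he.2⟩
  · intro c
    by_cases hc : c ∈ γ
    · have h := hF.2 c
      rw [← Sc_restrict S α hc] at h
      exact h.mono fun e he hV =>
        Finset.mem_filter.2 ⟨he, fun p hp => (Finset.mem_filter.1 (hV p hp)).1⟩
    · -- A color outside `γ` occurs at no point of the restricted instance.
      intro p hp
      simp [Sc, restrictColor, hc] at hp

/-- The simple graph with vertex set `P` whose edges are those of `F` with both ends in `P`. -/
def graphOn (P : Finset Pt) (F : Finset (Sym2 Pt)) : SimpleGraph P where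
  Adj p q := p ≠ q ∧ s((p : Pt), (q : Pt)) ∈ F
  symm := ⟨fun p q h => ⟨h.1.symm, by rw [Sym2.eq_swap]; exact h.2⟩⟩
  loopless := ⟨fun p h => h.1 rfl⟩

lemma graphOn_connected {P : Finset Pt} {F : Finset (Sym2 Pt)} (hP : P.Nonempty)
    (hF : ConnOn P F) : (graphOn P F).Connected := by
  have : Nonempty P := hP.to_subtype
  refine SimpleGraph.Connected.mk ?_
  rintro ⟨p, hp⟩ ⟨q, hq⟩
  have h := hF p hp q hq
  rw [SimpleGraph.reachable_iff_reflTransGen]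
  unfold ReachIn at h
  induction h with
  | refl => exact .refl
  | tail _ hab ih =>
    exact (ih hab.1).tail ⟨fun h => hab.2.2.1 (congrArg Subtype.val h), hab.2.2.2⟩

/-- A connected graph on a nonempty point set contains a spanning tree. -/
lemma exists_spanningTree_subset {P : Finset Pt} {F : Finset (Sym2 Pt)} (hP : P.Nonempty)
    (hF : ConnOn P F) : ∃ T ⊆ F, IsSpanningTreeOn P T := by
  classical
  obtain ⟨G, hG, hT⟩ := (graphOn_connected hP hF).exists_isTree_le
  let ι : Sym2 P ↪ Sym2 Pt := ⟨Sym2.map Subtype.val, Sym2.map.injective Subtype.val_injective⟩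
  have hmem : ∀ {a b : P}, G.Adj a b → s((a : Pt), (b : Pt)) ∈ G.edgeFinset.map ι :=
    fun {a b} h => Finset.mem_map.2 ⟨s(a, b), by simpa using h, rfl⟩
  have hcases : ∀ e ∈ G.edgeFinset.map ι, ∃ a b : P, G.Adj a b ∧ e = s((a : Pt), (b : Pt)) := by
    intro e he
    obtain ⟨d, hd, rfl⟩ := Finset.mem_map.1 he
    induction d using Sym2.ind with
    | _ a b => exact ⟨a, b, by simpa using hd, rfl⟩
  refine ⟨G.edgeFinset.map ι, ?_, ?_, ?_, ?_⟩
  · intro e he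
    obtain ⟨a, b, hab, rfl⟩ := hcases e he
    exact (hG hab).2
  · intro e he
    obtain ⟨a, b, hab, rfl⟩ := hcases e he
    refine ⟨fun h => hab.ne (Subtype.ext (Sym2.mk_isDiag_iff.1 h)), fun p hp => ?_⟩
    rcases Sym2.mem_iff.1 hp with rfl | rfl
    · exact a.2
    · exact b.2
  · intro p hp q hq
    have h := (SimpleGraph.reachable_iff_reflTransGen _ _).1
      (hT.connected.preconnected ⟨p, hp⟩ ⟨q, hq⟩)
    exact Relation.ReflTransGen.lift (p := AdjIn P (G.edgeFinset.map ι)) Subtype.val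
      (fun a b hab => ⟨a.2, b.2, fun h => hab.ne (Subtype.ext h), hmem hab⟩) _ _ h
  · rw [Finset.card_map, hT.card_edgeFinset, Fintype.card_coe]

/-- A minimum spanning tree of `P` weighs at most as much as any graph, possibly with further
vertices, whose subgraph induced by `P` is connected. -/
lemma IsMST.totalWeight_le {P : Finset Pt} {M F : Finset (Sym2 Pt)} (hM : IsMST P M)
    (hF : ConnOn P F) : totalWeight M ≤ totalWeight F := by
  -- The edge count `M.card + 1 = P.card` forces `P` to be nonempty.
  have hP : P.Nonempty := Finset.card_pos.1 (by have := hM.1.2.2; omega)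
  obtain ⟨T, hTF, hT⟩ := exists_spanningTree_subset hP hF
  exact (hM.2 T hT).trans (totalWeight_mono hTF)

/-- Algorithm A1 for `k = 3` (colors r = 0, b = 1, y = 2): the union of a
minimum red-blue CSG and a minimum spanning tree of `S_y` is a CSG of weight ≤ 2·OPT. -/
theorem A1_two_approx (S : Finset Pt) (α : Pt → Finset (Fin 3))
    (hα : ∀ p ∈ S, (α p).Nonempty)
    (Erb : Finset (Sym2 Pt))
    (hErb : IsMinCSG (Sγ S α {0, 1}) (restrictColor {0, 1} α) Erb)
    (Ey : Finset (Sym2 Pt)) (hEy : IsMST (Sc S α 2) Ey)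
    (Eopt : Finset (Sym2 Pt)) (hopt : IsMinCSG S α Eopt) :
    IsCSG S α (Erb ∪ Ey) ∧ totalWeight (Erb ∪ Ey) ≤ 2 * totalWeight Eopt := by
  refine ⟨⟨?_, ?_⟩, ?_⟩
  · intro e he
    rcases Finset.mem_union.1 he with he | he
    · exact hErb.1.1.mono (Finset.filter_subset _ _) e he
    · exact hEy.1.1.mono (Finset.filter_subset _ _) e he
  · intro c
    by_cases hc : c ∈ ({0, 1} : Finset (Fin 3))
    · have h := hErb.1.2 c
      rw [Sc_restrict S α hc] at h
      exact h.mono fun e he _ => Finset.mem_union_left _ he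
    · obtain rfl : c = 2 := by
        revert hc; revert c; decide
      exact hEy.1.2.1.mono fun e he _ => Finset.mem_union_right _ he
  · have h₁ := totalWeight_union_le Erb Ey
    have h₂ := hErb.totalWeight_restrict_le hopt.1
    have h₃ := hEy.totalWeight_le (hopt.1.2 2)
    linarith

end MCSG
end

section
/- For all real numbers ρ ≥ 1 and all β ∈ [0, 1], min( (5 + β)/3 , 5/3 + (2/3)(ρ − β − βρ) ) ≤ 2 − 1/(3 + 2ρ). -/
/-- the arithmetic core of the `(2 - 1/(3+2ρ))`-approximation analysis. -/
theorem min_bound_le (ρ β : ℝ) (hρ : 1 ≤ ρ) (hβ0 : 0 ≤ β) (hβ1 : β ≤ 1) :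
    min ((5 + β) / 3) (5 / 3 + (2 / 3) * (ρ - β - β * ρ)) ≤ 2 - 1 / (3 + 2 * ρ) := by
  have hpos : 0 < 3 + 2 * ρ := by linarith
  have hrhs : 2 - 1 / (3 + 2 * ρ) = (5 + 4 * ρ) / (3 + 2 * ρ) := by
    field_simp
    ring
  rw [hrhs, le_div_iff₀ hpos]
  -- The minimum is at most the average with weights `2 * (1 + ρ)` and `1`, chosen so that
  -- the terms in `β` cancel; the weighted sum of the two bounds is then exactly `5 + 4 * ρ`.
  have h₁ := mul_le_mul_of_nonneg_left
    (min_le_left ((5 + β) / 3) (5 / 3 + (2 / 3) * (ρ - β - β * ρ)))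
    (by linarith : 0 ≤ 2 * (1 + ρ))
  have h₂ := min_le_right ((5 + β) / 3) (5 / 3 + (2 / 3) * (ρ - β - β * ρ))
  linarith
end

section
/- Let (S, α) be a collinear instance of Min-kCSG, let G = (S, E) be a graph with property (★), and let i ∈ {1,…,n}. If e = {p_a, p_b} ∈ E with 1 ≤ a ≤ i < b ≤ n and α(e) = γ, then a is the largest index in {1,…,i} such that γ ⊆ α(p_a), and b is the smallest index in {i+1,…,n} such that γ ⊆ α(p_b). In particular, for each fixed color set γ, E contains at most one edge of color γ between S[1,i] and S[i+1,n]. -/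
/-!
A point whose color set contains the color of a crossing edge, and which lies on the same side
of the cut as an endpoint but closer to the cut, lies strictly between the two endpoints; this
is what property (★) forbids. So each endpoint is the point nearest to the cut on its side whose
color set contains the color of the edge. Two crossing edges of equal color therefore have the
same endpoints, by antisymmetry of `≤` applied to each coordinate.
-/

open scoped BigOperators

namespace CollinearCSG

/- A collinear instance of Min-kCSG: points `p_1 < ⋯ < p_n` on a line are modelled by a
strictly monotone map `x : Fin n → ℝ` (0-based indexing: the paper's point `p_i` is index
`i - 1`), together with a coloring `α : Fin n → Finset (Fin k)` with all values nonempty.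
Edges are ordered pairs `(a, b)` with `a < b`. -/

variable {n k : ℕ}

/-- The color of an edge: common colors of its endpoints. -/
def eColor (α : Fin n → Finset (Fin k)) (e : Fin n × Fin n) : Finset (Fin k) := α e.1 ∩ α e.2

/-- The weight (length) of an edge. -/
noncomputable def eW (x : Fin n → ℝ) (e : Fin n × Fin n) : ℝ := |x e.2 - x e.1|

/-- The total weight of an edge set. -/
noncomputable def wSum (x : Fin n → ℝ) (E : Finset (Fin n × Fin n)) : ℝ := ∑ e ∈ E, eW x e

/-- Each edge is listed with its left endpoint first. -/
def EdgeOK (E : Finset (Fin n × Fin n)) : Prop := ∀ e ∈ E, e.1 < e.2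

/-- One step of the graph given by the symmetric closure of the relation `R`,
restricted to the vertex set `V`. -/
def AdjRel (V : Set (Fin n)) (R : Fin n → Fin n → Prop) (a b : Fin n) : Prop :=
  a ∈ V ∧ b ∈ V ∧ a ≠ b ∧ (R a b ∨ R b a)

/-- The graph given by the relation `R`, restricted to the vertex set `V`, is connected. -/
def ConnRel (V : Set (Fin n)) (R : Fin n → Fin n → Prop) : Prop :=
  ∀ a ∈ V, ∀ b ∈ V, Relation.ReflTransGen (AdjRel V R) a b

/-- The adjacency relation of an edge set. -/
def memRel (E : Finset (Fin n × Fin n)) : Fin n → Fin n → Prop := fun a b => (a, b) ∈ E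

/-- The set `S_c` of points with primary color `c`. -/
def Sc (α : Fin n → Finset (Fin k)) (c : Fin k) : Set (Fin n) := {a | c ∈ α a}

/-- `E` is a colored spanning graph: for each primary color `c` the subgraph induced
by `S_c` is connected. -/
def IsCSG (α : Fin n → Finset (Fin k)) (E : Finset (Fin n × Fin n)) : Prop :=
  EdgeOK E ∧ ∀ c : Fin k, ConnRel (Sc α c) (memRel E)

/-- `E` is a minimum colored spanning graph. -/
def IsMinCSG (x : Fin n → ℝ) (α : Fin n → Finset (Fin k)) (E : Finset (Fin n × Fin n)) : Prop :=
  IsCSG α E ∧ ∀ E', IsCSG α E' → wSum x E ≤ wSum x E'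

/-- Property (★): no point strictly between the endpoints of an edge contains the
edge's color. -/
def Star (α : Fin n → Finset (Fin k)) (E : Finset (Fin n × Fin n)) : Prop :=
  ∀ e ∈ E, ∀ r : Fin n, e.1 < r → r < e.2 → ¬ eColor α e ⊆ α r

/-- `E_i^0`: the edges crossing the cut after the first `i` points (indices `< i` vs `≥ i`). -/
def cross (i : ℕ) (E : Finset (Fin n × Fin n)) : Finset (Fin n × Fin n) :=
  E.filter fun e => (e.1 : ℕ) < i ∧ i ≤ (e.2 : ℕ)

/-- `E_i^-`: the edges with both endpoints among the first `i` points. -/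
def leftE (i : ℕ) (E : Finset (Fin n × Fin n)) : Finset (Fin n × Fin n) :=
  E.filter fun e => (e.2 : ℕ) < i

/-- `E_i^+`: the edges with both endpoints outside the first `i` points. -/
def rightE (i : ℕ) (E : Finset (Fin n × Fin n)) : Finset (Fin n × Fin n) :=
  E.filter fun e => i ≤ (e.1 : ℕ)

/-- `S[1,i]_c`. -/
def leftSc (α : Fin n → Finset (Fin k)) (i : ℕ) (c : Fin k) : Set (Fin n) :=
  {a | (a : ℕ) < i ∧ c ∈ α a}

/-- `S[i+1,n]_c`. -/
def rightSc (α : Fin n → Finset (Fin k)) (i : ℕ) (c : Fin k) : Set (Fin n) :=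
  {a | i ≤ (a : ℕ) ∧ c ∈ α a}

/-- `X` is a set of edges on `S[1,i]`. -/
def OnLeft (i : ℕ) (X : Finset (Fin n × Fin n)) : Prop :=
  EdgeOK X ∧ ∀ e ∈ X, (e.2 : ℕ) < i

/-- A crossing edge set is valid if it is `E_i^0` of some CSG with property (★). -/
def Valid (α : Fin n → Finset (Fin k)) (i : ℕ) (X : Finset (Fin n × Fin n)) : Prop :=
  ∃ E, IsCSG α E ∧ Star α E ∧ cross i E = X

/-- The equivalence relation `π_i^c` determined by a graph `E`: two crossing edges of color
containing `c` are related iff their right endpoints lie in the same component of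
`(S[i+1,n]_c, (E_i^+)_c)`. -/
def piRel (α : Fin n → Finset (Fin k)) (E : Finset (Fin n × Fin n)) (i : ℕ) (c : Fin k)
    (e₁ e₂ : Fin n × Fin n) : Prop :=
  e₁ ∈ cross i E ∧ e₂ ∈ cross i E ∧ c ∈ eColor α e₁ ∧ c ∈ eColor α e₂ ∧
    Relation.ReflTransGen (AdjRel (rightSc α i c) (memRel (rightE i E))) e₁.2 e₂.2

/-- The edge set `E(π_i^c)` on `S[1,i]_c` (as a relation): two vertices are adjacent iff
they are left endpoints of `π`-equivalent crossing edges of color containing `c`. -/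
def EPi (α : Fin n → Finset (Fin k)) (X0 : Finset (Fin n × Fin n)) (c : Fin k)
    (piC : (Fin n × Fin n) → (Fin n × Fin n) → Prop) (a b : Fin n) : Prop :=
  ∃ e₁ ∈ X0, ∃ e₂ ∈ X0, c ∈ eColor α e₁ ∧ c ∈ eColor α e₂ ∧
    e₁.1 = a ∧ e₂.1 = b ∧ piC e₁ e₂

/-- The relation of edges of `X` whose color contains `c`. -/
def Xrel (α : Fin n → Finset (Fin k)) (c : Fin k) (X : Finset (Fin n × Fin n))
    (a b : Fin n) : Prop :=
  (a, b) ∈ X ∧ c ∈ α a ∧ c ∈ α b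

/-- `X ∈ 𝒳(X0, Π)`: `X` is an edge set on `S[1,i]` such that for every primary color `c`
the graph `(S[1,i]_c, X_c ∪ E(π^c))` is connected. -/
def InXFam (α : Fin n → Finset (Fin k)) (i : ℕ) (X0 : Finset (Fin n × Fin n))
    (Pi : Fin k → (Fin n × Fin n) → (Fin n × Fin n) → Prop)
    (X : Finset (Fin n × Fin n)) : Prop :=
  OnLeft i X ∧ ∀ c : Fin k,
    ConnRel (leftSc α i c) (fun a b => Xrel α c X a b ∨ EPi α X0 c (Pi c) a b)

/-- `R` is an equivalence relation on the set `D`. -/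
def IsEqvOn {β : Type*} (D : Set β) (R : β → β → Prop) : Prop :=
  (∀ a ∈ D, R a a) ∧ (∀ a b, R a b → R b a) ∧ (∀ a b c, R a b → R b c → R a c) ∧
    (∀ a b, R a b → a ∈ D ∧ b ∈ D)

/-- `(X0)_c` as a set. -/
def colorClass (α : Fin n → Finset (Fin k)) (c : Fin k) (X0 : Finset (Fin n × Fin n)) :
    Set (Fin n × Fin n) :=
  {e | e ∈ X0 ∧ c ∈ eColor α e}

/-- Compatibility of valid edge sets `X0'` (at cut `i-1`) and `X0` (at cut `i`). -/
def Compatible (α : Fin n → Finset (Fin k)) (i : ℕ)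
    (X0' X0 : Finset (Fin n × Fin n)) : Prop :=
  ∃ Pi : Fin k → (Fin n × Fin n) → (Fin n × Fin n) → Prop,
    (∀ c, IsEqvOn (colorClass α c X0) (Pi c)) ∧
    ∃ X, InXFam α i X0 Pi X ∧ X0' = cross (i - 1) (X ∪ X0)

/-- An edge is incident to the paper's point `p_i` (0-based index `i - 1`). -/
def Inc (i : ℕ) (e : Fin n × Fin n) : Prop := (e.1 : ℕ) = i - 1 ∨ (e.2 : ℕ) = i - 1

/-- The base relation whose transitive closure is `π̂_{i-1}^c`. -/
def hatBase (α : Fin n → Finset (Fin k)) (i : ℕ) (X0' X0 : Finset (Fin n × Fin n))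
    (Pi : Fin k → (Fin n × Fin n) → (Fin n × Fin n) → Prop) (c : Fin k)
    (e₁ e₂ : Fin n × Fin n) : Prop :=
  e₁ ∈ X0' ∧ e₂ ∈ X0' ∧ c ∈ eColor α e₁ ∧ c ∈ eColor α e₂ ∧
    ((Inc i e₁ ∧ Inc i e₂) ∨
     (e₁ ∈ X0 ∧ e₂ ∈ X0 ∧ Pi c e₁ e₂) ∨
     (Inc i e₁ ∧ e₂ ∈ X0 ∧ ∃ f ∈ X0, c ∈ eColor α f ∧ Inc i f ∧ Pi c e₂ f) ∨
     (Inc i e₂ ∧ e₁ ∈ X0 ∧ ∃ f ∈ X0, c ∈ eColor α f ∧ Inc i f ∧ Pi c e₁ f))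

/-- `π̂_{i-1}^c`: the transitive closure of `hatBase`. -/
def hatPi (α : Fin n → Finset (Fin k)) (i : ℕ) (X0' X0 : Finset (Fin n × Fin n))
    (Pi : Fin k → (Fin n × Fin n) → (Fin n × Fin n) → Prop) (c : Fin k) :
    (Fin n × Fin n) → (Fin n × Fin n) → Prop :=
  Relation.TransGen (hatBase α i X0' X0 Pi c)

/-- Condition (d2): for every color `c` of `p_i` such that `S[1,i]_c ≠ {p_i}`, the point
`p_i` is incident to an edge of `(X0')_c`, or to an edge of `(X0)_c` that is
`π_i^c`-equivalent to some edge of `(X0)_c` incident to `S[1,i-1]_c`. -/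
def D2cond (α : Fin n → Finset (Fin k)) (i : ℕ) (pi : Fin n)
    (X0' X0 : Finset (Fin n × Fin n))
    (Pi : Fin k → (Fin n × Fin n) → (Fin n × Fin n) → Prop) : Prop :=
  ∀ c ∈ α pi, (∃ a : Fin n, (a : ℕ) < i ∧ c ∈ α a ∧ a ≠ pi) →
    ((∃ e ∈ X0', c ∈ eColor α e ∧ (e.1 = pi ∨ e.2 = pi)) ∨
     (∃ e ∈ X0, c ∈ eColor α e ∧ (e.1 = pi ∨ e.2 = pi) ∧
       ∃ f ∈ X0, c ∈ eColor α f ∧ (f.1 : ℕ) < i - 1 ∧ c ∈ α f.1 ∧ Pi c e f))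


/-- in a graph with property (★), the endpoints of a crossing edge of color
`γ` are determined: the left endpoint is the largest index `< i` whose color set contains
`γ`, the right endpoint the smallest index `≥ i` whose color set contains `γ`; in
particular there is at most one crossing edge of each color. -/
theorem crossing_edge_unique {n k : ℕ} (x : Fin n → ℝ) (hx : StrictMono x)
    (α : Fin n → Finset (Fin k)) (hα : ∀ a, (α a).Nonempty)
    (E : Finset (Fin n × Fin n)) (hok : EdgeOK E) (hstar : Star α E)
    (i : ℕ) (hi1 : 1 ≤ i) (hin : i ≤ n) :
    (∀ e ∈ E, (e.1 : ℕ) < i → i ≤ (e.2 : ℕ) →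
      (∀ j : Fin n, (j : ℕ) < i → eColor α e ⊆ α j → j ≤ e.1) ∧
      (∀ j : Fin n, i ≤ (j : ℕ) → eColor α e ⊆ α j → e.2 ≤ j)) ∧
    (∀ e₁ ∈ cross i E, ∀ e₂ ∈ cross i E, eColor α e₁ = eColor α e₂ → e₁ = e₂) := by
  have key : ∀ e ∈ E, (e.1 : ℕ) < i → i ≤ (e.2 : ℕ) →
      (∀ j : Fin n, (j : ℕ) < i → eColor α e ⊆ α j → j ≤ e.1) ∧
      (∀ j : Fin n, i ≤ (j : ℕ) → eColor α e ⊆ α j → e.2 ≤ j) := by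
    intro e he h1 h2
    -- A counterexample `j` on either side would lie strictly between the endpoints of `e`.
    refine ⟨fun j hj hs => ?_, fun j hj hs => ?_⟩
    · by_contra! h
      exact hstar e he j h (Fin.lt_def.mpr (by omega)) hs
    · by_contra! h
      exact hstar e he j (Fin.lt_def.mpr (by omega)) h hs
  refine ⟨key, fun e he f hf hef => ?_⟩
  simp only [cross, Finset.mem_filter] at he hf
  obtain ⟨he, he1, he2⟩ := he
  obtain ⟨hf, hf1, hf2⟩ := hf
  obtain ⟨hel, her⟩ := key e he he1 he2
  obtain ⟨hfl, hfr⟩ := key f hf hf1 hf2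
  rw [hef] at hel her
  rw [← hef] at hfl hfr
  exact Prod.ext
    (le_antisymm (hfl _ he1 Finset.inter_subset_left) (hel _ hf1 Finset.inter_subset_left))
    (le_antisymm (her _ hf2 Finset.inter_subset_right) (hfr _ he2 Finset.inter_subset_right))

end CollinearCSG
end

section
/- Let (S, α) be a collinear instance of Min-kCSG and let G = (S, E) be a graph with property (★). If two distinct edges e_1 = {p_a, p_b} and e_2 = {p_i, p_j} of E overlap, i.e., a ≤ i < b ≤ j, then α(e_1) ≠ α(e_2). -/
open scoped BigOperators

namespace CollinearCSG

/- A collinear instance of Min-kCSG: points `p_1 < ⋯ < p_n` on a line are modelled by a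
strictly monotone map `x : Fin n → ℝ` (0-based indexing: the paper's point `p_i` is index
`i - 1`), together with a coloring `α : Fin n → Finset (Fin k)` with all values nonempty.
Edges are ordered pairs `(a, b)` with `a < b`. -/

variable {n k : ℕ}

/-- in a graph with property (★), two distinct overlapping edges have
different colors. -/
theorem overlapping_edges_distinct_colors {n k : ℕ} (x : Fin n → ℝ) (hx : StrictMono x)
    (α : Fin n → Finset (Fin k)) (hα : ∀ a, (α a).Nonempty)
    (E : Finset (Fin n × Fin n)) (hok : EdgeOK E) (hstar : Star α E)
    (e₁ e₂ : Fin n × Fin n) (h₁ : e₁ ∈ E) (h₂ : e₂ ∈ E) (hne : e₁ ≠ e₂)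
    (hov : e₁.1 ≤ e₂.1 ∧ e₂.1 < e₁.2 ∧ e₁.2 ≤ e₂.2) :
    eColor α e₁ ≠ eColor α e₂ := by
  intro hcol
  rcases hov.1.lt_or_eq with hlt | heq
  · -- The left endpoint of `e₂` lies strictly inside `e₁` and carries the common color.
    exact hstar e₁ h₁ e₂.1 hlt hov.2.1 (hcol ▸ Finset.inter_subset_left)
  · -- The left endpoints agree, so the right endpoint of `e₁` lies strictly inside `e₂`.
    have hlt : e₁.2 < e₂.2 := hov.2.2.lt_of_ne fun h => hne (Prod.ext heq h)
    refine hstar e₂ h₂ e₁.2 hov.2.1 hlt ?_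
    rw [← hcol]
    exact Finset.inter_subset_right

end CollinearCSG
end

section
/- Let (S, α) be a collinear instance of Min-kCSG, let i ∈ {1,…,n}, and let X_i^0 be a set of edges between S[1,i] and S[i+1,n], each satisfying property (★). Then X_i^0 is valid (i.e., there exists a colored spanning graph G = (S, E) for (S, α) with property (★) such that X_i^0 = E_i^0) if and only if for every primary color c ∈ {1,…,k} with S[1,i]_c ≠ ∅ and S[i+1,n]_c ≠ ∅, there is an edge e ∈ X_i^0 with c ∈ α(e). -/
/-!
Necessity: if `c` occurs on both sides of the cut, a path in `S_c` from one side to the other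
uses an edge crossing the cut, and both endpoints of that edge have color `c`.

Sufficiency: add to `X` every edge with property (★) that does not cross the cut. Any two
points of color `c` on the same side are joined by such edges (`reach_of_same_side`): if the edge
`{a, b}` violates (★), some point `r` between `a` and `b` has all the colors of the edge, in
particular `c`, and one recurses on `{a, r}` and `{r, b}`. When `c` occurs on both sides, an edge
of `X` whose color contains `c` joins the two sides of `S_c`.
-/

open scoped BigOperators

namespace CollinearCSG

/- A collinear instance of Min-kCSG: points `p_1 < ⋯ < p_n` on a line are modelled by a
strictly monotone map `x : Fin n → ℝ` (0-based indexing: the paper's point `p_i` is index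
`i - 1`), together with a coloring `α : Fin n → Finset (Fin k)` with all values nonempty.
Edges are ordered pairs `(a, b)` with `a < b`. -/

variable {n k : ℕ}

lemma AdjRel.symm' {n : ℕ} {V : Set (Fin n)} {R : Fin n → Fin n → Prop} {a b : Fin n}
    (h : AdjRel V R a b) : AdjRel V R b a :=
  ⟨h.2.1, h.1, h.2.2.1.symm, h.2.2.2.symm⟩

lemma reach_symm {n : ℕ} {V : Set (Fin n)} {R : Fin n → Fin n → Prop} {a b : Fin n}
    (h : Relation.ReflTransGen (AdjRel V R) a b) : Relation.ReflTransGen (AdjRel V R) b a := by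
  induction h with
  | refl => exact .refl
  | tail _ hs ih => exact .head hs.symm' ih

lemma exists_crossing_step {n : ℕ} {V : Set (Fin n)} {R : Fin n → Fin n → Prop} {i : ℕ}
    {a b : Fin n} (h : Relation.ReflTransGen (AdjRel V R) a b)
    (ha : (a : ℕ) < i) (hb : i ≤ (b : ℕ)) :
    ∃ u v : Fin n, (u : ℕ) < i ∧ i ≤ (v : ℕ) ∧ AdjRel V R u v := by
  induction h with
  | refl => omega
  | @tail u v _ huv ih =>
    by_cases hu : i ≤ (u : ℕ)
    · exact ih hu
    · exact ⟨u, v, by omega, hb, huv⟩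

/-- If `E` contains every (★)-edge that does not cross the cut, then any two points of color `c`
on the same side of the cut are connected within `S_c`. -/
lemma reach_of_same_side {n k : ℕ} (α : Fin n → Finset (Fin k)) (i : ℕ)
    (E : Finset (Fin n × Fin n))
    (hE : ∀ a b : Fin n, a < b → ((b : ℕ) < i ∨ i ≤ (a : ℕ)) →
      (∀ r : Fin n, a < r → r < b → ¬ eColor α (a, b) ⊆ α r) → (a, b) ∈ E)
    (c : Fin k) (a b : Fin n) (hab : a ≤ b) (hside : (b : ℕ) < i ∨ i ≤ (a : ℕ))
    (ha : c ∈ α a) (hb : c ∈ α b) :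
    Relation.ReflTransGen (AdjRel (Sc α c) (memRel E)) a b := by
  induction hd : (b : ℕ) - (a : ℕ) using Nat.strong_induction_on generalizing a b with
  | _ d ih =>
    rcases hab.eq_or_lt with rfl | hlt
    · exact .refl
    by_cases hs : ∀ r : Fin n, a < r → r < b → ¬ eColor α (a, b) ⊆ α r
    · exact .single ⟨ha, hb, hlt.ne, Or.inl (hE a b hlt hside hs)⟩
    · push Not at hs
      obtain ⟨r, har, hrb, hsub⟩ := hs
      have hr : c ∈ α r := hsub (Finset.mem_inter.2 ⟨ha, hb⟩)
      have h1 : (a : ℕ) < r := har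
      have h2 : (r : ℕ) < b := hrb
      exact (ih _ (by omega) a r har.le (by omega) ha hr rfl).trans
        (ih _ (by omega) r b hrb.le (by omega) hr hb rfl)

/-- characterization of valid crossing edge sets: a set of (★)-crossing
edges at cut `i` is valid iff for every primary color `c` present on both sides of the
cut, some edge of the set has color containing `c`. -/
theorem valid_iff {n k : ℕ} (x : Fin n → ℝ) (hx : StrictMono x)
    (α : Fin n → Finset (Fin k)) (hα : ∀ a, (α a).Nonempty)
    (i : ℕ) (hi1 : 1 ≤ i) (hin : i ≤ n)
    (X : Finset (Fin n × Fin n))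
    (hXcross : ∀ e ∈ X, e.1 < e.2 ∧ (e.1 : ℕ) < i ∧ i ≤ (e.2 : ℕ))
    (hXstar : ∀ e ∈ X, ∀ r : Fin n, e.1 < r → r < e.2 → ¬ eColor α e ⊆ α r) :
    Valid α i X ↔
      ∀ c : Fin k, (∃ a : Fin n, (a : ℕ) < i ∧ c ∈ α a) →
        (∃ b : Fin n, i ≤ (b : ℕ) ∧ c ∈ α b) → ∃ e ∈ X, c ∈ eColor α e := by
  classical
  constructor
  · rintro ⟨E, ⟨hOK, hconn⟩, -, rfl⟩ c ⟨a, hai, hac⟩ ⟨b, hbi, hbc⟩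
    obtain ⟨u, v, hu, hv, huc, hvc, -, hE⟩ := exists_crossing_step (hconn c a hac b hbc) hai hbi
    rcases hE with hE | hE
    · exact ⟨(u, v), Finset.mem_filter.2 ⟨hE, hu, hv⟩, Finset.mem_inter.2 ⟨huc, hvc⟩⟩
    · -- edges list their left endpoint first, so `(v, u)` cannot be an edge
      have : (v : ℕ) < u := hOK _ hE
      omega
  · intro h
    let Y : Finset (Fin n × Fin n) := Finset.univ.filter fun e =>
      e.1 < e.2 ∧ ((e.2 : ℕ) < i ∨ i ≤ (e.1 : ℕ)) ∧
        ∀ r : Fin n, e.1 < r → r < e.2 → ¬ eColor α e ⊆ α r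
    have hY : ∀ e, e ∈ Y ↔ e.1 < e.2 ∧ ((e.2 : ℕ) < i ∨ i ≤ (e.1 : ℕ)) ∧
        ∀ r : Fin n, e.1 < r → r < e.2 → ¬ eColor α e ⊆ α r := by
      intro e; simp [Y]
    have side := reach_of_same_side α i (X ∪ Y) (fun a b hab hs hst =>
      Finset.mem_union_right _ ((hY (a, b)).2 ⟨hab, hs, hst⟩))
    have same : ∀ (c : Fin k) (a b : Fin n), c ∈ α a → c ∈ α b →
        (((a : ℕ) < i ∧ (b : ℕ) < i) ∨ (i ≤ (a : ℕ) ∧ i ≤ (b : ℕ))) →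
        Relation.ReflTransGen (AdjRel (Sc α c) (memRel (X ∪ Y))) a b := by
      intro c a b ha hb hs
      rcases le_total a b with hab | hab
      · exact side c a b hab (by omega) ha hb
      · exact reach_symm (side c b a hab (by omega) hb ha)
    have across : ∀ (c : Fin k) (a b : Fin n), c ∈ α a → c ∈ α b → (a : ℕ) < i → i ≤ (b : ℕ) →
        Relation.ReflTransGen (AdjRel (Sc α c) (memRel (X ∪ Y))) a b := by
      intro c a b ha hb hai hbi
      obtain ⟨e, he, hce⟩ := h c ⟨a, hai, ha⟩ ⟨b, hbi, hb⟩
      obtain ⟨hlt, he1, he2⟩ := hXcross e he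
      obtain ⟨hc1, hc2⟩ := Finset.mem_inter.1 hce
      exact ((same c a e.1 ha hc1 (Or.inl ⟨hai, he1⟩)).tail
        ⟨hc1, hc2, hlt.ne, Or.inl (Finset.mem_union_left _ he)⟩).trans
        (same c e.2 b hc2 hb (Or.inr ⟨he2, hbi⟩))
    refine ⟨X ∪ Y, ⟨?_, ?_⟩, ?_, ?_⟩
    · intro e he
      rcases Finset.mem_union.1 he with he | he
      · exact (hXcross e he).1
      · exact ((hY e).1 he).1
    · intro c a ha b hb
      rcases lt_or_ge (a : ℕ) i with hai | hai <;> rcases lt_or_ge (b : ℕ) i with hbi | hbi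
      · exact same c a b ha hb (Or.inl ⟨hai, hbi⟩)
      · exact across c a b ha hb hai hbi
      · exact reach_symm (across c b a hb ha hbi hai)
      · exact same c a b ha hb (Or.inr ⟨hai, hbi⟩)
    · intro e he
      rcases Finset.mem_union.1 he with he | he
      · exact hXstar e he
      · exact ((hY e).1 he).2.2
    · ext e
      simp only [cross, Finset.mem_filter, Finset.mem_union]
      constructor
      · rintro ⟨he | he, h1, h2⟩
        · exact he
        · have := ((hY e).1 he).2.1
          omega
      · exact fun he => ⟨Or.inl he, (hXcross e he).2⟩

end CollinearCSG
end

section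
/- Let (S, α) be a collinear instance of Min-kCSG, let G = (S, E) be a colored spanning graph for (S, α) with property (★), let i ∈ {1,…,n}, and let X be an edge set on S[1,i]. Then (S, X ∪ E_i^0 ∪ E_i^+) is a colored spanning graph for (S, α) if and only if for every primary color c ∈ {1,…,k}, the graph (S[1,i]_c, X_c ∪ E(π_i^c)) is connected, where π_i^c is the equivalence relation determined by E_i^0 and E_i^+ of G. -/
/-! A connectivity argument, one primary color `c` at a time. Walks of the new graph between left
points project to the left graph: an excursion to the right of the cut runs inside one component
of `(S[i+1,n]_c, (E_i^+)_c)` and uses two crossing edges, which are therefore `π_i^c`-equivalent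
(`new_walk`). Conversely every left step lifts to a walk of the new graph (`left_lift`), and
connectivity of the original graph shows that each right component is incident to a crossing
edge, unless it is all of `S_c` (`old_walk`); so every right point is joined to a left point as
soon as `S[1,i]_c` is nonempty, and otherwise the right side is already connected. -/

open scoped BigOperators

namespace CollinearCSG

/- A collinear instance of Min-kCSG: points `p_1 < ⋯ < p_n` on a line are modelled by a
strictly monotone map `x : Fin n → ℝ` (0-based indexing: the paper's point `p_i` is index
`i - 1`), together with a coloring `α : Fin n → Finset (Fin k)` with all values nonempty.
Edges are ordered pairs `(a, b)` with `a < b`. -/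

variable {n k : ℕ}

lemma cross_adj {n k : ℕ} (α : Fin n → Finset (Fin k)) (E : Finset (Fin n × Fin n))
    (hE : EdgeOK E) (i : ℕ) (X : Finset (Fin n × Fin n)) (c : Fin k) {e : Fin n × Fin n}
    (he : e ∈ cross i E) (hc : c ∈ eColor α e) :
    AdjRel (Sc α c) (memRel (X ∪ cross i E ∪ rightE i E)) e.1 e.2 :=
  ⟨(Finset.mem_inter.mp hc).1, (Finset.mem_inter.mp hc).2,
    (hE e (Finset.mem_filter.mp he).1).ne,
    Or.inl (Finset.mem_union_left _ (Finset.mem_union_right _ he))⟩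

lemma right_lift {n k : ℕ} (α : Fin n → Finset (Fin k)) (E : Finset (Fin n × Fin n))
    (i : ℕ) (X : Finset (Fin n × Fin n)) (c : Fin k) {a b : Fin n}
    (h : Relation.ReflTransGen (AdjRel (rightSc α i c) (memRel (rightE i E))) a b) :
    Relation.ReflTransGen (AdjRel (Sc α c) (memRel (X ∪ cross i E ∪ rightE i E))) a b :=
  Relation.ReflTransGen.mono (fun _ _ h => ⟨h.1.2, h.2.1.2, h.2.2.1,
    h.2.2.2.imp (Finset.mem_union_right _) (Finset.mem_union_right _)⟩) _ _ h

/-- Walks of the left graph lift to the new graph: a `π_i^c`-edge becomes the detour that crosses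
the cut, walks inside one right component, and crosses back. -/
lemma left_lift {n k : ℕ} (α : Fin n → Finset (Fin k)) (E : Finset (Fin n × Fin n))
    (hE : EdgeOK E) (i : ℕ) (X : Finset (Fin n × Fin n)) (c : Fin k) {a b : Fin n}
    (h : Relation.ReflTransGen (AdjRel (leftSc α i c)
      (fun a b => Xrel α c X a b ∨ EPi α (cross i E) c (piRel α E i c) a b)) a b) :
    Relation.ReflTransGen (AdjRel (Sc α c) (memRel (X ∪ cross i E ∪ rightE i E))) a b := by
  have step : ∀ u v, u ≠ v →
      (Xrel α c X u v ∨ EPi α (cross i E) c (piRel α E i c) u v) →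
      Relation.ReflTransGen (AdjRel (Sc α c) (memRel (X ∪ cross i E ∪ rightE i E))) u v := by
    rintro u v huv (h | ⟨e, he, f, hf, hce, hcf, rfl, rfl, -, -, -, -, hw⟩)
    · exact .single ⟨h.2.1, h.2.2, huv,
        Or.inl (Finset.mem_union_left _ (Finset.mem_union_left _ h.1))⟩
    · exact (Relation.ReflTransGen.single (cross_adj α E hE i X c he hce)).trans
        ((right_lift α E i X c hw).trans
          (reach_symm (.single (cross_adj α E hE i X c hf hcf))))
  induction h with
  | refl => exact .refl
  | tail _ h ih =>
    refine ih.trans ?_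
    rcases h.2.2.2 with h' | h'
    · exact step _ _ h.2.2.1 h'
    · exact reach_symm (step _ _ h.2.2.1.symm h')

/-- A walk of color `c` in the original graph that starts right of the cut either stays there,
or its initial right component is incident to a crossing edge of color `c`. -/
lemma old_walk {n k : ℕ} (α : Fin n → Finset (Fin k)) (E : Finset (Fin n × Fin n))
    (hE : EdgeOK E) (i : ℕ) (c : Fin k) {a v : Fin n} (ha : a ∈ rightSc α i c)
    (h : Relation.ReflTransGen (AdjRel (Sc α c) (memRel E)) a v) :
    (v ∈ rightSc α i c ∧
      Relation.ReflTransGen (AdjRel (rightSc α i c) (memRel (rightE i E))) a v) ∨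
    ∃ e ∈ cross i E, c ∈ eColor α e ∧
      Relation.ReflTransGen (AdjRel (rightSc α i c) (memRel (rightE i E))) a e.2 := by
  induction h with
  | refl => exact Or.inl ⟨ha, .refl⟩
  | @tail v w _ h ih =>
    rcases ih with ⟨hv, hav⟩ | ih
    · obtain ⟨hvc, hwc, hne, hvw⟩ := h
      by_cases hw : (w : ℕ) < i
      · have hwv : (w, v) ∈ E := by
          rcases hvw with hvw | hvw
          · have h1 : (v : ℕ) < w := hE _ hvw
            have h2 := hv.1
            omega
          · exact hvw
        exact Or.inr ⟨(w, v), Finset.mem_filter.mpr ⟨hwv, hw, hv.1⟩,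
          Finset.mem_inter.mpr ⟨hwc, hvc⟩, hav⟩
      · have hwr : w ∈ rightSc α i c := ⟨not_lt.mp hw, hwc⟩
        refine Or.inl ⟨hwr, hav.tail ⟨hv, hwr, hne, ?_⟩⟩
        exact hvw.imp (fun h => Finset.mem_filter.mpr ⟨h, hv.1⟩)
          (fun h => Finset.mem_filter.mpr ⟨h, hwr.1⟩)
    · exact Or.inr ih

/-- A walk of color `c` in the new graph that starts left of the cut projects to the left graph:
each excursion to the right remembers the crossing edge by which it left, and its return
along a second crossing edge is a `π_i^c`-edge. -/
lemma new_walk {n k : ℕ} (α : Fin n → Finset (Fin k)) (E : Finset (Fin n × Fin n))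
    (hE : EdgeOK E) (i : ℕ) (X : Finset (Fin n × Fin n)) (hX : OnLeft i X) (c : Fin k)
    {a v : Fin n} (ha : a ∈ leftSc α i c)
    (h : Relation.ReflTransGen
      (AdjRel (Sc α c) (memRel (X ∪ cross i E ∪ rightE i E))) a v) :
    (v ∈ leftSc α i c ∧ Relation.ReflTransGen (AdjRel (leftSc α i c)
      (fun a b => Xrel α c X a b ∨ EPi α (cross i E) c (piRel α E i c) a b)) a v) ∨
    (v ∈ rightSc α i c ∧ ∃ e ∈ cross i E, c ∈ eColor α e ∧
      Relation.ReflTransGen (AdjRel (leftSc α i c)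
        (fun a b => Xrel α c X a b ∨ EPi α (cross i E) c (piRel α E i c) a b)) a e.1 ∧
      Relation.ReflTransGen (AdjRel (rightSc α i c) (memRel (rightE i E))) e.2 v) := by
  have hll : ∀ u w : Fin n, (w : ℕ) < i → (u, w) ∈ X ∪ cross i E ∪ rightE i E → (u, w) ∈ X := by
    intro u w hw h
    simp only [cross, rightE, Finset.mem_union, Finset.mem_filter] at h
    rcases h with (h | h) | h
    · exact h
    · exact absurd h.2.2 (not_le.mpr hw)
    · have h1 : (u : ℕ) < w := hE _ h.1
      have h2 := h.2
      omega
  have hlr : ∀ u w : Fin n, (u : ℕ) < i → i ≤ (w : ℕ) →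
      (u, w) ∈ X ∪ cross i E ∪ rightE i E → (u, w) ∈ cross i E := by
    intro u w hu hw h
    rcases Finset.mem_union.mp h with h | h
    · rcases Finset.mem_union.mp h with h | h
      · exact absurd (hX.2 _ h) (not_lt.mpr hw)
      · exact h
    · exact absurd (Finset.mem_filter.mp h).2 (not_le.mpr hu)
  have hrr : ∀ u w : Fin n, i ≤ (u : ℕ) → (u, w) ∈ X ∪ cross i E ∪ rightE i E →
      (u, w) ∈ rightE i E := by
    intro u w hu h
    rcases Finset.mem_union.mp h with h | h
    · rcases Finset.mem_union.mp h with h | h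
      · have h1 : (u : ℕ) < w := hX.1 _ h
        have h2 : (w : ℕ) < i := hX.2 _ h
        omega
      · exact absurd (Finset.mem_filter.mp h).2.1 (not_lt.mpr hu)
    · exact h
  have hrl : ∀ u w : Fin n, i ≤ (u : ℕ) → (w : ℕ) < i →
      (u, w) ∉ X ∪ cross i E ∪ rightE i E := by
    intro u w hu hw h
    have h1 : (u : ℕ) < w := hX.1 _ (hll u w hw h)
    omega
  induction h with
  | refl => exact Or.inl ⟨ha, .refl⟩
  | @tail v w _ h ih =>
    obtain ⟨hvc, hwc, hne, hvw⟩ := h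
    rcases ih with ⟨hv, hav⟩ | ⟨hv, e, he, hce, hae, hev⟩
    · by_cases hw : (w : ℕ) < i
      · refine Or.inl ⟨⟨hw, hwc⟩, hav.tail ⟨hv, ⟨hw, hwc⟩, hne, ?_⟩⟩
        exact hvw.imp (fun h => Or.inl ⟨hll _ _ hw h, hvc, hwc⟩)
          (fun h => Or.inl ⟨hll _ _ hv.1 h, hwc, hvc⟩)
      · have hwi := not_lt.mp hw
        have hcr := hlr v w hv.1 hwi (hvw.resolve_right (hrl w v hwi hv.1))
        exact Or.inr ⟨⟨hwi, hwc⟩, (v, w), hcr, Finset.mem_inter.mpr ⟨hvc, hwc⟩, hav, .refl⟩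
    · by_cases hw : (w : ℕ) < i
      · have hcr := hlr w v hw hv.1 (hvw.resolve_left (hrl v w hv.1 hw))
        have hcf : c ∈ eColor α (w, v) := Finset.mem_inter.mpr ⟨hwc, hvc⟩
        refine Or.inl ⟨⟨hw, hwc⟩, ?_⟩
        by_cases hew : e.1 = w
        · exact hew ▸ hae
        · exact hae.tail ⟨⟨(Finset.mem_filter.mp he).2.1, (Finset.mem_inter.mp hce).1⟩,
            ⟨hw, hwc⟩, hew,
            Or.inl (Or.inr ⟨e, he, (w, v), hcr, hce, hcf, rfl, rfl, he, hcr, hce, hcf, hev⟩)⟩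
      · have hwi := not_lt.mp hw
        refine Or.inr ⟨⟨hwi, hwc⟩, e, he, hce, hae, hev.tail ⟨hv, ⟨hwi, hwc⟩, hne, ?_⟩⟩
        exact hvw.imp (hrr _ _ hv.1) (hrr _ _ hwi)

/-- for a CSG `E` with property (★), replacing its left part by an edge set
`X` on `S[1,i]` yields a CSG iff for every primary color `c` the graph
`(S[1,i]_c, X_c ∪ E(π_i^c))` is connected, where `π_i^c` is determined by `E`. -/
theorem left_replacement_iff {n k : ℕ} (x : Fin n → ℝ) (hx : StrictMono x)
    (α : Fin n → Finset (Fin k)) (hα : ∀ a, (α a).Nonempty)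
    (E : Finset (Fin n × Fin n)) (hG : IsCSG α E) (hstar : Star α E)
    (i : ℕ) (hi1 : 1 ≤ i) (hin : i ≤ n)
    (X : Finset (Fin n × Fin n)) (hX : OnLeft i X) :
    IsCSG α (X ∪ cross i E ∪ rightE i E) ↔
      ∀ c : Fin k, ConnRel (leftSc α i c)
        (fun a b => Xrel α c X a b ∨ EPi α (cross i E) c (piRel α E i c) a b) := by
  constructor
  · intro h c a ha b hb
    rcases new_walk α E hG.1 i X hX c ha (h.2 c a ha.2 b hb.2) with h | ⟨h, -⟩
    · exact h.2
    · exact absurd h.1 (not_le.mpr hb.1)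
  · intro h
    refine ⟨fun e he => ?_, fun c a ha b hb => ?_⟩
    · simp only [cross, rightE, Finset.mem_union, Finset.mem_filter] at he
      rcases he with (he | he) | he
      exacts [hX.1 e he, hG.1 e he.1, hG.1 e he.1]
    · -- either `a` already reaches every point of color `c`, or it reaches the left side
      have key : ∀ a ∈ Sc α c, ∀ b ∈ Sc α c,
          Relation.ReflTransGen (AdjRel (Sc α c) (memRel (X ∪ cross i E ∪ rightE i E))) a b ∨
          ∃ l ∈ leftSc α i c,
            Relation.ReflTransGen (AdjRel (Sc α c) (memRel (X ∪ cross i E ∪ rightE i E))) a l := by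
        intro a ha b hb
        by_cases hai : (a : ℕ) < i
        · exact Or.inr ⟨a, ⟨hai, ha⟩, .refl⟩
        · rcases old_walk α E hG.1 i c ⟨not_lt.mp hai, ha⟩ (hG.2 c a ha b hb) with
            ⟨-, h1⟩ | ⟨e, he, hc, h1⟩
          · exact Or.inl (right_lift α E i X c h1)
          · refine Or.inr ⟨e.1, ⟨(Finset.mem_filter.mp he).2.1, (Finset.mem_inter.mp hc).1⟩, ?_⟩
            exact (right_lift α E i X c h1).trans
              (reach_symm (.single (cross_adj α E hG.1 i X c he hc)))
      rcases key a ha b hb with h1 | ⟨l, hl, h1⟩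
      · exact h1
      · rcases key b hb a ha with h2 | ⟨m, hm, h2⟩
        · exact reach_symm h2
        · exact h1.trans ((left_lift α E hG.1 i X c (h c l hl m hm)).trans (reach_symm h2))

end CollinearCSG
end
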